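/- arXiv:2212.07012 — 5 statements merged into one kernel-verified Lean document; each statement's English description precedes it below -/
import Mathlib

section
/- For every w ∈ ℂ, the set {τ ∈ ℍ : E2(τ) ≠ 0 and τ − 6i/(π E2(τ)) = w} is infinite; moreover, the set {τ ∈ ℍ : E2(τ) = 0} is infinite. In other words, the function p attains every value in the Riemann sphere infinitely often on ℍ. -/
/-!
The function `p` is equivariant for `SL₂(ℤ)`, because `E₂` is quasi-modular of weight two:
`p ((aτ + b) / (cτ + d)) = (a p(τ) + b) / (c p(τ) + d)`, and `E₂` vanishes at the transformed
point exactly when `c p(τ) + d = 0`. Only two transformations are needed here: `τ ↦ -1/τ`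
and `τ ↦ τ / (1 - nτ)` (`E2_neg_inv`, `E2_parabolic`).

On the imaginary axis `E₂` is real and `E₂(it)` increases with `t`. Since `E₂(i) = 3/π`, the
function `t E₂(it) - 6/π` is negative at `t = 1` and nonnegative at `t = 2`, so `p` has a
zero `τ₀ = it₀` (`exists_zero_p`). Then `-1/τ₀` is a zero of `E₂`, and by periodicity so are
all its integer translates.

For the values `w ∈ ℂ`: near `τ₀` the function `p` is holomorphic and not constant, so by
the open mapping theorem it maps each neighbourhood of `τ₀` onto a neighbourhood of `0`. As
`w / (nw + 1) → 0`, for all large `n` there is `τₙ` close to `τ₀` with `p(τₙ) = w / (nw + 1)`.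
By equivariance `p` takes the value `w` at `τₙ / (1 - nτₙ)`. The imaginary parts of these points
are positive and tend to `0`, so there are infinitely many of them.
-/

/-- `q = exp(2πiτ)`. -/
noncomputable def qexp (τ : ℂ) : ℂ := Complex.exp (2 * Real.pi * Complex.I * τ)

/-- Divisor power sum `σ_k(n) = ∑_{d | n} d^k`, as a complex number. -/
noncomputable def sigmaC (k n : ℕ) : ℂ := ∑ d ∈ Nat.divisors n, (d : ℂ) ^ k

/-- Eisenstein series `E₂`. -/
noncomputable def E2 (τ : ℂ) : ℂ := 1 - 24 * ∑' n : ℕ, sigmaC 1 (n + 1) * qexp τ ^ (n + 1)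

/-- Eisenstein series `E₄`. -/
noncomputable def E4 (τ : ℂ) : ℂ := 1 + 240 * ∑' n : ℕ, sigmaC 3 (n + 1) * qexp τ ^ (n + 1)

/-- Eisenstein series `E₆`. -/
noncomputable def E6 (τ : ℂ) : ℂ := 1 - 504 * ∑' n : ℕ, sigmaC 5 (n + 1) * qexp τ ^ (n + 1)

/-- The discriminant form `Δ = (E₄³ - E₆²)/1728`. -/
noncomputable def Δfun (τ : ℂ) : ℂ := (E4 τ ^ 3 - E6 τ ^ 2) / 1728

/-- The ratio of quasi-periods `p(τ) = τ - 6i/(π E₂(τ))`. -/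
noncomputable def pfun (τ : ℂ) : ℂ := τ - 6 * Complex.I / (Real.pi * E2 τ)

open Complex Filter Topology

/-- The series `E2` agrees on the upper half-plane with Mathlib's weight two Eisenstein series. -/
lemma E2_eq_mathlib (z : UpperHalfPlane) : E2 z = EisensteinSeries.E2 z := by
  rw [EisensteinSeries.E2_eq_tsum_cexp, E2,
    tsum_pnat_eq_tsum_succ (f := fun n : ℕ ↦
      (ArithmeticFunction.sigma 1 n : ℂ) * cexp (2 * Real.pi * I * z) ^ n)]
  simp [sigmaC, qexp, ArithmeticFunction.sigma_apply]

lemma E2_differentiableOn : DifferentiableOn ℂ E2 {z | 0 < z.im} := by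
  refine (UpperHalfPlane.mdifferentiable_iff.mp E2_mdifferentiable).congr fun z hz ↦ ?_
  have := E2_eq_mathlib ⟨z, hz⟩
  simpa [UpperHalfPlane.ofComplex_apply_of_im_pos hz] using this

lemma E2_analyticAt {z : ℂ} (hz : 0 < z.im) : AnalyticAt ℂ E2 z :=
  E2_differentiableOn.analyticAt ((isOpen_lt continuous_const continuous_im).mem_nhds hz)

lemma E2_add_intCast (z : ℂ) (n : ℤ) : E2 (z + n) = E2 z := by
  have : qexp (z + n) = qexp z := by
    rw [qexp, qexp, mul_add, Complex.exp_add, mul_comm (2 * (Real.pi : ℂ) * I) n,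
      Complex.exp_int_mul_two_pi_mul_I, mul_one]
  simp [E2, this]

lemma neg_inv_im_pos {z : ℂ} (hz : 0 < z.im) : 0 < (-1 / z).im := by
  have hz0 : z ≠ 0 := by rintro rfl; simp at hz
  have h : (-1 / z).im = z.im / normSq z := by simp [neg_div]
  rw [h]
  exact div_pos hz (normSq_pos.mpr hz0)

lemma E2_neg_inv {z : ℂ} (hz : 0 < z.im) :
    E2 (-1 / z) = z ^ 2 * E2 z - 6 * I * z / Real.pi := by
  have hz0 : z ≠ 0 := by rintro rfl; simp at hz
  have hpi : (Real.pi : ℂ) ≠ 0 := by exact_mod_cast Real.pi_ne_zero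
  have key := EisensteinSeries.G2_S_transform ⟨z, hz⟩
  have h1 := E2_eq_mathlib ⟨z, hz⟩
  have h2 := E2_eq_mathlib (ModularGroup.S • ⟨z, hz⟩)
  have h3 : ((ModularGroup.S • (⟨z, hz⟩ : UpperHalfPlane) : UpperHalfPlane) : ℂ) = -1 / z := by
    rw [UpperHalfPlane.modular_S_smul]
    change (-z)⁻¹ = -1 / z
    rw [inv_neg, neg_div, one_div]
  rw [h3] at h2
  rw [h2]
  change E2 z = _ at h1
  rw [h1]
  simp only [EisensteinSeries.E2, Pi.smul_apply, smul_eq_mul, riemannZeta_two]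
  rw [key]
  simp only
  field_simp
  ring_nf

/-- Quasi-modularity of `E₂` for the matrix with rows `(1, 0)` and `(-n, 1)`. -/
lemma E2_parabolic {z : ℂ} (hz : 0 < z.im) (n : ℕ) :
    E2 (z / (1 - n * z)) = (1 - n * z) ^ 2 * E2 z + 6 * I * n * (1 - n * z) / Real.pi := by
  have hz0 : z ≠ 0 := by rintro rfl; simp at hz
  have hpi : (Real.pi : ℂ) ≠ 0 := by exact_mod_cast Real.pi_ne_zero
  have hs : 0 < (-1 / z + (n : ℤ)).im := by
    simpa using neg_inv_im_pos hz
  have hs0 : -1 / z + (n : ℤ) ≠ 0 := by intro h; rw [h] at hs; simp at hs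
  have hd : 1 - n * z ≠ 0 := by
    intro h
    apply hs0
    field_simp
    push_cast
    linear_combination -h
  have h := E2_neg_inv hs
  rw [E2_add_intCast, E2_neg_inv hz] at h
  have e : -1 / (-1 / z + ((n : ℤ) : ℂ)) = z / (1 - n * z) := by
    rw [div_eq_div_iff hs0 hd]
    field_simp
    push_cast
    ring
  rw [e] at h
  rw [h]
  push_cast
  field_simp
  ring

lemma im_parabolic (z : ℂ) (n : ℕ) :
    (z / (1 - n * z)).im = z.im / normSq (1 - n * z) := by
  simp [Complex.div_im]
  ring

lemma hasSum_E2_imag {t : ℝ} (ht : 0 < t) :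
    HasSum (fun m : ℕ ↦ (((if m = 0 then 1 else -24 * (ArithmeticFunction.sigma 1 m : ℝ)) *
      Real.exp (-(2 * Real.pi * t)) ^ m : ℝ) : ℂ)) (E2 (t * I)) := by
  have hz : 0 < ((t : ℂ) * I).im := by simpa using ht
  have h := EisensteinSeries.hasSum_qExpansion_E2 (z := ⟨t * I, hz⟩)
  rw [← E2_eq_mathlib] at h
  have hq : cexp (2 * Real.pi * I * (t * I)) = ((Real.exp (-(2 * Real.pi * t)) : ℝ) : ℂ) := by
    rw [Complex.ofReal_exp]
    congr 1
    push_cast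
    linear_combination (2 * Real.pi * t : ℂ) * I_sq
  convert! h using 2 with m
  simp only [smul_eq_mul, hq]
  split_ifs <;> push_cast <;> rfl

lemma E2_imag_im {t : ℝ} (ht : 0 < t) : (E2 (t * I)).im = 0 := by
  have h := Complex.hasSum_im (hasSum_E2_imag ht)
  simp only [ofReal_im] at h
  exact h.unique hasSum_zero

lemma E2_imag_re_mono {s t : ℝ} (hs : 0 < s) (hst : s ≤ t) :
    (E2 (s * I)).re ≤ (E2 (t * I)).re := by
  refine hasSum_le (fun m ↦ ?_) (Complex.hasSum_re (hasSum_E2_imag hs))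
    (Complex.hasSum_re (hasSum_E2_imag (hs.trans_le hst)))
  simp only [ofReal_re]
  split_ifs with hm
  · simp [hm]
  · have : Real.exp (-(2 * Real.pi * t)) ^ m ≤ Real.exp (-(2 * Real.pi * s)) ^ m := by
      have := Real.pi_pos
      gcongr
    have h2 : (0 : ℝ) ≤ ArithmeticFunction.sigma 1 m := by positivity
    nlinarith [mul_le_mul_of_nonneg_left this h2]

lemma E2_I : E2 I = 3 / Real.pi := by
  have hpi : (Real.pi : ℂ) ≠ 0 := by exact_mod_cast Real.pi_ne_zero
  have h := E2_neg_inv (z := I) (by simp)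
  have e : -1 / I = I := by rw [div_eq_iff I_ne_zero, I_mul_I]
  rw [e, I_sq, mul_assoc, I_mul_I] at h
  field_simp at h ⊢
  linear_combination h / 2

/-- The function `p` has a zero on the imaginary axis. The equation is written without
division by `E₂`. -/
lemma exists_zero_p : ∃ z : ℂ, 0 < z.im ∧ z * E2 z = 6 * I / Real.pi := by
  have hpi : (Real.pi : ℂ) ≠ 0 := by exact_mod_cast Real.pi_ne_zero
  have hc : ContinuousOn (fun t : ℝ ↦ t * (E2 (t * I)).re) (Set.Icc 1 2) := by
    refine continuousOn_id.mul (continuous_re.comp_continuousOn ?_)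
    refine E2_differentiableOn.continuousOn.comp (by fun_prop) fun t ht ↦ ?_
    have : 0 < t := by linarith [ht.1]
    simpa using this
  have h1 : (E2 ((1 : ℝ) * I)).re = 3 / Real.pi := by
    have e : (3 / Real.pi : ℂ) = ((3 / Real.pi : ℝ) : ℂ) := by push_cast; rfl
    rw [ofReal_one, one_mul, E2_I, e, ofReal_re]
  have h2 := E2_imag_re_mono (s := 1) (t := 2) one_pos one_le_two
  rw [h1] at h2
  have h3 : 0 < 3 / Real.pi := by positivity
  obtain ⟨t, ht, h⟩ := intermediate_value_Icc (a := (1 : ℝ)) (b := 2) one_le_two hc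
    (show 6 / Real.pi ∈ _ by
      have e : 6 / Real.pi = 2 * (3 / Real.pi) := by ring
      constructor
      · simp only [h1]; linarith
      · exact e.le.trans (mul_le_mul_of_nonneg_left h2 zero_le_two))
  have ht0 : 0 < t := by linarith [ht.1]
  refine ⟨t * I, by simpa using ht0, ?_⟩
  have hE : E2 (t * I) = ((E2 (t * I)).re : ℂ) :=
    Complex.ext (by simp) (by simpa using E2_imag_im ht0)
  have hre : (t : ℂ) * ((E2 (t * I)).re : ℂ) = 6 / Real.pi := by exact_mod_cast h
  rw [hE]
  linear_combination I * hre

/-- If `τ E₂(τ)` were constant near a point, then by the identity theorem it would be constant on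
the upper half-plane; comparing `τ` and `τ + 1` this forces `E₂ = 0`. -/
lemma not_eventually_const {z : ℂ} (hz : 0 < z.im) :
    ¬ ∀ᶠ u in 𝓝 z, u * E2 u = 6 * I / Real.pi := by
  intro h
  have hpi : (Real.pi : ℂ) ≠ 0 := by exact_mod_cast Real.pi_ne_zero
  have hA : AnalyticOnNhd ℂ (fun u ↦ u * E2 u) {u : ℂ | 0 < u.im} :=
    fun u hu ↦ analyticAt_id.mul (E2_analyticAt hu)
  have hconv : IsPreconnected {u : ℂ | 0 < u.im} :=
    (convex_halfSpace_im_gt 0).isPreconnected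
  have heq := hA.eqOn_of_preconnected_of_eventuallyEq
    (analyticOnNhd_const (v := 6 * I / (Real.pi : ℂ))) hconv hz h
  have h1 := heq (show I ∈ {u : ℂ | 0 < u.im} by simp)
  have h2 := heq (show I + (1 : ℤ) ∈ {u : ℂ | 0 < u.im} by simp)
  simp only [E2_add_intCast, E2_I] at h1 h2
  have : (3 / Real.pi : ℂ) = 0 := by push_cast at h2; linear_combination h2 - h1
  simp [hpi] at this

lemma infinite_zeros : {τ : ℂ | 0 < τ.im ∧ E2 τ = 0}.Infinite := by
  obtain ⟨z, hz, h⟩ := exists_zero_p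
  have him : 0 < (-1 / z).im := neg_inv_im_pos hz
  refine Set.infinite_of_injective_forall_mem (f := fun n : ℤ ↦ -1 / z + n) ?_ fun n ↦ ⟨?_, ?_⟩
  · intro a b hab
    simpa using hab
  · simpa using him
  · rw [E2_add_intCast, E2_neg_inv hz]
    linear_combination z * h

/-- Equivariance of `p` for the matrix with rows `(1, 0)` and `(-n, 1)`, solved for the value `w`.
-/
lemma p_parabolic {z w : ℂ} (hz : 0 < z.im) (n : ℕ) (hw : n * w + 1 ≠ 0) (hE : E2 z ≠ 0)
    (hp : pfun z = w / (n * w + 1)) :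
    E2 (z / (1 - n * z)) ≠ 0 ∧ pfun (z / (1 - n * z)) = w := by
  have hpi : (Real.pi : ℂ) ≠ 0 := by exact_mod_cast Real.pi_ne_zero
  have hd : 1 - n * z ≠ 0 := by
    intro h
    rcases Nat.eq_zero_or_pos n with rfl | hn
    · simp at h
    · have := congrArg Complex.im h
      simp at this
      rcases this with h | h
      · omega
      · linarith
  have hq : (z * (Real.pi * E2 z) - 6 * I) * (n * w + 1) = w * (Real.pi * E2 z) := by
    rw [pfun, eq_div_iff hw] at hp
    have hX : (Real.pi : ℂ) * E2 z ≠ 0 := mul_ne_zero hpi hE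
    have e : 6 * I / (Real.pi * E2 z) * (Real.pi * E2 z) = 6 * I := div_mul_cancel₀ _ hX
    linear_combination (Real.pi * E2 z) * hp + (n * w + 1) * e
  have hEn : E2 (z / (1 - n * z)) * (Real.pi * (n * w + 1)) = (1 - n * z) * (Real.pi * E2 z) := by
    rw [E2_parabolic hz]
    field_simp
    linear_combination (-(n : ℂ)) * hq
  have hne : E2 (z / (1 - n * z)) ≠ 0 := by
    intro h
    rw [h, zero_mul] at hEn
    exact mul_ne_zero hd (mul_ne_zero hpi hE) hEn.symm
  refine ⟨hne, ?_⟩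
  have e : (Real.pi : ℂ) * E2 (z / (1 - n * z)) =
      (1 - n * z) * (Real.pi * E2 z) / (n * w + 1) := by
    rw [eq_div_iff hw]; linear_combination hEn
  have hfrac : z / (1 - n * z) - 6 * I / ((1 - n * z) * (Real.pi * E2 z) / (n * w + 1)) =
      (z * (Real.pi * E2 z) - 6 * I * (n * w + 1)) / ((1 - n * z) * (Real.pi * E2 z)) := by
    field_simp
  rw [pfun, e, hfrac, div_eq_iff (mul_ne_zero hd (mul_ne_zero hpi hE))]
  linear_combination hq

lemma infinite_values (w : ℂ) : {τ : ℂ | 0 < τ.im ∧ E2 τ ≠ 0 ∧ pfun τ = w}.Infinite := by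
  have hpi : (Real.pi : ℂ) ≠ 0 := by exact_mod_cast Real.pi_ne_zero
  obtain ⟨z, hz, h⟩ := exists_zero_p
  have hE : E2 z ≠ 0 := by
    intro h0
    rw [h0, mul_zero] at h
    exact div_ne_zero (mul_ne_zero (by norm_num) I_ne_zero) hpi h.symm
  have hpz : pfun z = 0 := by
    rw [pfun, sub_eq_zero, eq_div_iff (mul_ne_zero hpi hE)]
    field_simp at h
    linear_combination h
  have hcE : ContinuousAt E2 z := (E2_analyticAt hz).continuousAt
  have hEev : ∀ᶠ u in 𝓝 z, E2 u ≠ 0 := hcE.eventually_ne hE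
  have hpA : AnalyticAt ℂ pfun z :=
    analyticAt_id.sub (analyticAt_const.div (analyticAt_const.mul (E2_analyticAt hz))
      (mul_ne_zero hpi hE))
  have hopen : 𝓝 0 ≤ map pfun (𝓝 z) := by
    rcases hpA.eventually_constant_or_nhds_le_map_nhds with hc | hc
    · refine absurd ?_ (not_eventually_const hz)
      filter_upwards [hc, hEev] with u hu hEu
      rw [hpz, pfun, sub_eq_zero, eq_div_iff (mul_ne_zero hpi hEu)] at hu
      field_simp
      linear_combination hu
    · rwa [hpz] at hc
  -- Near `z` the imaginary part lies between two positive constants.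
  have hU : {u : ℂ | E2 u ≠ 0 ∧ z.im / 2 < u.im ∧ u.im < 2 * z.im} ∈ 𝓝 z := by
    filter_upwards [hEev, continuous_im.continuousAt.eventually (lt_mem_nhds (half_lt_self hz)),
      continuous_im.continuousAt.eventually (gt_mem_nhds (show z.im < 2 * z.im by linarith))]
      with u h1 h2 h3 using ⟨h1, h2, h3⟩
  have himg := hopen (image_mem_map hU)
  have hden : ∀ᶠ n : ℕ in atTop, (n : ℂ) * w + 1 ≠ 0 := by
    rcases eq_or_ne w 0 with rfl | hw
    · simp
    · have : ∀ᶠ n : ℕ in atTop, ‖w⁻¹‖ < n := tendsto_natCast_atTop_atTop.eventually_gt_atTop _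
      filter_upwards [this] with n hn h0
      have : w⁻¹ = -(n : ℂ) := inv_eq_of_mul_eq_one_left (by linear_combination -h0)
      rw [this, norm_neg, Complex.norm_natCast] at hn
      exact lt_irrefl _ hn
  have hlim : Tendsto (fun n : ℕ ↦ w / (n * w + 1)) atTop (𝓝 0) := by
    rcases eq_or_ne w 0 with rfl | hw
    · simp
    · have h1 : Tendsto (fun n : ℕ ↦ (n : ℂ) + w⁻¹) atTop (Bornology.cobounded ℂ) :=
        (tendsto_add_const_cobounded w⁻¹).comp tendsto_natCast_atTop_cobounded
      refine (tendsto_inv₀_cobounded.comp h1).congr fun n ↦ ?_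
      have : (n : ℂ) + w⁻¹ = (n * w + 1) / w := by field_simp
      rw [Function.comp_apply, this, inv_div]
  have hmem : ∀ᶠ n : ℕ in atTop, ∃ u : ℂ, (E2 u ≠ 0 ∧ z.im / 2 < u.im ∧ u.im < 2 * z.im) ∧
      pfun u = w / (n * w + 1) := hlim.eventually himg
  -- Finitely many solutions would have imaginary parts bounded below by some `ε > 0`.
  intro hfin
  obtain ⟨ε, hε, hlow⟩ : ∃ ε > 0, ∀ τ : ℂ, 0 < τ.im → E2 τ ≠ 0 → pfun τ = w → ε ≤ τ.im := by
    have : ∀ᶠ ε : ℝ in 𝓝[>] 0, ∀ τ ∈ {τ : ℂ | 0 < τ.im ∧ E2 τ ≠ 0 ∧ pfun τ = w}, ε ≤ τ.im := by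
      rw [eventually_all_finite hfin]
      intro τ hτ
      exact nhdsWithin_le_nhds ((gt_mem_nhds hτ.1).mono fun _ h ↦ h.le)
    obtain ⟨ε, h1, h2⟩ := (this.and self_mem_nhdsWithin).exists
    exact ⟨ε, h2, fun τ a b c ↦ h1 τ ⟨a, b, c⟩⟩
  have hbig : ∀ᶠ n : ℕ in atTop, 8 / (z.im * ε) + 1 < n :=
    tendsto_natCast_atTop_atTop.eventually_gt_atTop _
  obtain ⟨n, hn0, ⟨u, ⟨hEu, hu1, hu2⟩, hpu⟩, hn⟩ := (hden.and (hmem.and hbig)).exists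
  have hu : 0 < u.im := by linarith
  obtain ⟨r1, r2⟩ := p_parabolic hu n hn0 hEu hpu
  have hn1 : (1 : ℝ) < n := by
    have : 0 < 8 / (z.im * ε) := by positivity
    linarith
  have hns : (n * u.im) ^ 2 ≤ normSq (1 - n * u) := by
    rw [normSq_apply]
    simp
    nlinarith [mul_self_nonneg (1 - n * u.re)]
  have hpos : 0 < normSq (1 - n * u) := lt_of_lt_of_le (by positivity) hns
  have hge := hlow _ (by rw [im_parabolic]; positivity) r1 r2
  rw [im_parabolic, le_div_iff₀ hpos] at hge
  -- `ε n² (Im u)² ≤ Im u` contradicts `n > 8 / (ε Im z)` because `Im u > Im z / 2`.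
  have h8 : 8 < n * (z.im * ε) := by
    have : 8 / (z.im * ε) < n := by linarith
    rwa [div_lt_iff₀ (by positivity)] at this
  have a1 : ε * (n * u.im) ^ 2 ≤ u.im := (mul_le_mul_of_nonneg_left hns hε.le).trans hge
  have a2 : ε * n ^ 2 * u.im ≤ 1 := by
    have : (ε * n ^ 2 * u.im) * u.im ≤ 1 * u.im := by linarith
    exact le_of_mul_le_mul_right this hu
  have a3 : n * (z.im * ε) / 2 ≤ ε * n ^ 2 * u.im := by
    have b1 : ε * n * (z.im / 2) ≤ ε * n * u.im := by gcongr
    have b2 : ε * n * u.im * 1 ≤ ε * n * u.im * n := by gcongr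
    linarith
  linarith

/-- Heins' theorem: the function `p(τ) = τ - 6i/(π E₂(τ))` attains every value in the
Riemann sphere infinitely often on the upper half-plane. -/
theorem p_attains_every_value_infinitely_often (w : ℂ) :
    {τ : ℂ | 0 < τ.im ∧ E2 τ ≠ 0 ∧ pfun τ = w}.Infinite ∧
    {τ : ℂ | 0 < τ.im ∧ E2 τ = 0}.Infinite :=
  ⟨infinite_values w, infinite_zeros⟩
end

section
/- For every u ∈ ℂ with u ∉ Γ and u + ω₂ ∉ Γ, one has ζ(u + ω₂) − ζ(u) = (π²/(3ω₂)) · E2(τ), where τ = ω₁/ω₂. In particular, the quasi-period η₂ := ζ(u + ω₂) − ζ(u) is independent of u and equals (π²/(3ω₂)) E2(τ). -/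
/-- The rank-2 lattice generated by `ω₁` and `ω₂`. -/
def lattice (ω₁ ω₂ : ℂ) : Set ℂ := {z | ∃ k n : ℤ, z = (k : ℂ) * ω₁ + (n : ℂ) * ω₂}

/-- The Weierstrass zeta-function for the lattice generated by `ω₁` and `ω₂`. -/
noncomputable def wzeta (ω₁ ω₂ : ℂ) (u : ℂ) : ℂ :=
  1 / u + ∑' kn : ℤ × ℤ,
    if kn = (0, 0) then 0
    else 1 / (u - ((kn.1 : ℂ) * ω₁ + (kn.2 : ℂ) * ω₂))
      + 1 / ((kn.1 : ℂ) * ω₁ + (kn.2 : ℂ) * ω₂)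
      + u / ((kn.1 : ℂ) * ω₁ + (kn.2 : ℂ) * ω₂) ^ 2

open Filter Asymptotics Topology

/-- The `(k, n)` term of the series defining `wzeta`. -/
noncomputable def wzetaTerm (ω₁ ω₂ u : ℂ) (kn : ℤ × ℤ) : ℂ :=
  if kn = (0, 0) then 0
    else 1 / (u - ((kn.1 : ℂ) * ω₁ + (kn.2 : ℂ) * ω₂))
      + 1 / ((kn.1 : ℂ) * ω₁ + (kn.2 : ℂ) * ω₂)
      + u / ((kn.1 : ℂ) * ω₁ + (kn.2 : ℂ) * ω₂) ^ 2

/-- The terms are `u² / (γ² (u - γ)) = O(|γ|⁻³)`; finitely many lattice points, including any at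
which a denominator vanishes, are irrelevant. -/
lemma summable_wzetaTerm {ω₁ ω₂ : ℂ} (hω₂ : ω₂ ≠ 0) (hτ : 0 < (ω₁ / ω₂).im) (u : ℂ) :
    Summable (wzetaTerm ω₁ ω₂ u) := by
  rw [← (finTwoArrowEquiv ℤ).summable_iff]
  refine EisensteinSeries.summable_of_isBigO_rpow_norm (a := 3) (by norm_num) ?_
  set γ : (Fin 2 → ℤ) → ℂ := fun m ↦ (m 0 : ℂ) * ω₁ + (m 1 : ℂ) * ω₂ with hγ
  have hγinv : (fun m ↦ (γ m)⁻¹) =O[cofinite] fun m ↦ ‖m‖⁻¹ := by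
    have h := (EisensteinSeries.isBigO_linear_add_const_vec ⟨ω₁ / ω₂, hτ⟩ 0 0).const_mul_left ω₂⁻¹
    refine h.congr_left fun m ↦ ?_
    rw [← mul_inv]
    congr 1
    simp only [hγ]
    push_cast
    field_simp
    ring
  have hne : ∀ᶠ m : Fin 2 → ℤ in cofinite, m ≠ 0 := by
    simp [eventually_cofinite]
  have hγne : ∀ m : Fin 2 → ℤ, m ≠ 0 → γ m ≠ 0 := by
    intro m hm h0
    have h := UpperHalfPlane.linear_ne_zero ⟨ω₁ / ω₂, hτ⟩ (cd := fun i ↦ (m i : ℝ))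
      (fun h ↦ hm (funext fun i ↦ by simpa using congrFun h i))
    apply h
    simp only [hγ] at h0
    have : (m 0 : ℂ) * (ω₁ / ω₂) + m 1 = 0 := by
      field_simp
      linear_combination h0
    simpa using this
  have hnormγ : (fun m : Fin 2 → ℤ ↦ ‖m‖) =O[cofinite] γ := by
    have := hγinv.inv_rev (hne.mono fun m hm h ↦ absurd (inv_eq_zero.mp h) (hγne m hm))
    simpa using this
  have hu : (fun _ : Fin 2 → ℤ ↦ u) =o[cofinite] γ := by
    have h1 : (fun _ : Fin 2 → ℤ ↦ u) =o[cofinite] fun m : Fin 2 → ℤ ↦ (‖m‖ : ℝ) := by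
      rw [isLittleO_const_left]
      right
      simpa [Function.comp_def] using
        tendsto_norm_comp_cofinite_atTop_of_isClosedEmbedding
          (Topology.IsClosedEmbedding.id (X := Fin 2 → ℤ))
    exact h1.trans_isBigO hnormγ
  have hsub : γ =O[cofinite] fun m ↦ γ m - u := hu.right_isBigO_sub
  have hsubinv : (fun m ↦ (γ m - u)⁻¹) =O[cofinite] fun m ↦ ‖m‖⁻¹ :=
    (hsub.inv_rev (hne.mono fun m hm h ↦ absurd h (hγne m hm))).trans hγinv
  have hsubne : ∀ᶠ m in cofinite, γ m - u ≠ 0 := by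
    filter_upwards [hsub.eq_zero_imp, hne] with m h hm h0 using hγne m hm (h h0)
  have hprod := ((hγinv.mul hγinv).mul hsubinv).const_mul_left (-u ^ 2)
  refine (hprod.congr' ?_ ?_)
  · filter_upwards [hne, hsubne] with m hm hs
    have hm' : ¬ ((m 0, m 1) : ℤ × ℤ) = (0, 0) := by
      intro h
      apply hm
      ext i
      fin_cases i <;> simp_all
    have h1 := hγne m hm
    have h2 : u - γ m ≠ 0 := fun h ↦ hs (by linear_combination -h)
    change _ = wzetaTerm ω₁ ω₂ u (m 0, m 1)
    rw [wzetaTerm, if_neg hm']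
    change _ = 1 / (u - γ m) + 1 / γ m + u / γ m ^ 2
    rw [← neg_sub u (γ m)]
    field_simp
    ring
  · refine Eventually.of_forall fun m ↦ ?_
    have : ‖m‖ ^ (3 : ℝ) = ‖m‖ ^ (3 : ℕ) := by norm_cast
    simp only [this]
    ring

/-- The value of the telescoping series, granted its summability: the partial sums over `[-N, N)` are
`1/(c + Nω) - 1/(c - Nω)`. -/
lemma hasSum_telescope {ω : ℂ} (hω : ω ≠ 0) (c : ℂ)
    (hs : Summable fun n : ℤ ↦ 1 / (c - n * ω) - 1 / (c - (n + 1 : ℤ) * ω)) :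
    HasSum (fun n : ℤ ↦ 1 / (c - n * ω) - 1 / (c - (n + 1 : ℤ) * ω)) 0 := by
  convert hs.hasSum
  rw [← tsum_eq_of_summable_unconditional (L := SummationFilter.symmetricIco ℤ) hs]
  symm
  apply HasSum.tsum_eq
  rw [SummationFilter.hasSum_symmetricIco_int_iff]
  simp_rw [Finset.sum_Ico_int_sub _ fun n : ℤ ↦ 1 / (c - n * ω)]
  have h1 := (EisensteinSeries.tendsto_zero_inv_linear (c / ω) 1).const_mul ω⁻¹
  have h2 := (EisensteinSeries.tendsto_zero_inv_linear_sub (c / ω) 1).const_mul ω⁻¹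
  have h := h1.sub h2
  simp only [mul_zero, sub_zero] at h
  refine h.congr fun N ↦ ?_
  simp only [one_div, ← mul_inv]
  congr 2
  · push_cast
    field_simp
    ring
  · push_cast
    field_simp

lemma pi_sq_div_three_mul_E2 (z : UpperHalfPlane) :
    (Real.pi : ℂ) ^ 2 / 3 * E2 z = EisensteinSeries.G2 z := by
  rw [EisensteinSeries.G2_eq_tsum_cexp, riemannZeta_two, E2,
    tsum_pnat_eq_tsum_succ (f := fun n ↦ (ArithmeticFunction.sigma 1 n : ℂ) *
      Complex.exp (2 * Real.pi * Complex.I * z) ^ n)]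
  have : ∀ n : ℕ, sigmaC 1 n = (ArithmeticFunction.sigma 1 n : ℂ) := fun n ↦ by
    simp [sigmaC, ArithmeticFunction.sigma_apply]
  simp only [this, qexp]
  ring

/-- The quasi-period `η₂ = ζ(u + ω₂) - ζ(u)` equals `(π²/(3ω₂)) E₂(τ)`; in particular
it is independent of `u`. -/
theorem quasi_period_two_formula (ω₁ ω₂ : ℂ) (hω₁ : ω₁ ≠ 0) (hω₂ : ω₂ ≠ 0)
    (hτ : 0 < (ω₁ / ω₂).im) (u : ℂ)
    (hu : u ∉ lattice ω₁ ω₂) (hu' : u + ω₂ ∉ lattice ω₁ ω₂) :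
    wzeta ω₁ ω₂ (u + ω₂) - wzeta ω₁ ω₂ u
      = (Real.pi : ℂ) ^ 2 / (3 * ω₂) * E2 (ω₁ / ω₂) := by
  set z : UpperHalfPlane := ⟨ω₁ / ω₂, hτ⟩
  have hz : (z : ℂ) = ω₁ / ω₂ := rfl
  -- At `(0, 0)` the junk value `ω₂ / 0 ^ 2 = 0` makes `g` equal to `1 / (u + ω₂) - 1 / u`.
  let g : ℤ × ℤ → ℂ := fun kn ↦
    (1 / (u + ω₂ - kn.1 * ω₁ - kn.2 * ω₂) - 1 / (u + ω₂ - kn.1 * ω₁ - (kn.2 + 1 : ℤ) * ω₂))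
      + ω₂⁻¹ * EisensteinSeries.eisSummand 2 ![kn.1, kn.2] z
  have hg : HasSum g (wzeta ω₁ ω₂ (u + ω₂) - wzeta ω₁ ω₂ u) := by
    have h := ((summable_wzetaTerm hω₂ hτ (u + ω₂)).hasSum.sub
      (summable_wzetaTerm hω₂ hτ u).hasSum).add
      (hasSum_ite_eq ((0, 0) : ℤ × ℤ) (1 / (u + ω₂) - 1 / u))
    convert! h using 1
    · funext kn
      obtain ⟨k, n⟩ := kn
      have he : EisensteinSeries.eisSummand 2 ![k, n] z = ω₂ ^ 2 / (k * ω₁ + n * ω₂) ^ 2 := by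
        have : (k : ℂ) * ω₁ + n * ω₂ = ω₂ * (k * (ω₁ / ω₂) + n) := by field_simp
        rw [this, mul_pow, div_mul_eq_div_div, div_self (pow_ne_zero 2 hω₂)]
        simp [EisensteinSeries.eisSummand, hz]
      simp only [g, he, wzetaTerm]
      by_cases h0 : (k, n) = (0, 0)
      · obtain ⟨rfl, rfl⟩ := Prod.mk.inj h0
        simp
      · simp only [if_neg h0]
        rw [show u + ω₂ - k * ω₁ - n * ω₂ = u + ω₂ - (k * ω₁ + n * ω₂) by ring,
          show u + ω₂ - k * ω₁ - (n + 1 : ℤ) * ω₂ = u - (k * ω₁ + n * ω₂) by push_cast; ring]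
        have : ω₂⁻¹ * (ω₂ ^ 2 / (k * ω₁ + n * ω₂) ^ 2) = ω₂ / (k * ω₁ + n * ω₂) ^ 2 := by
          field_simp
        rw [this]
        ring
    · simp only [wzeta, wzetaTerm]
      ring
  have hrow (k : ℤ) : HasSum (fun n ↦ g (k, n)) (ω₂⁻¹ * EisensteinSeries.e2Summand k z) := by
    have he := ((EisensteinSeries.e2Summand_summable k z).hasSum).mul_left ω₂⁻¹
    have ht := hasSum_telescope hω₂ (u + ω₂ - k * ω₁)
      (((hg.summable.prod_factor k).sub he.summable).congr fun n ↦ by simp [g])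
    simpa [g, EisensteinSeries.e2Summand] using ht.add he
  have hcol := hg.prod_fiberwise hrow
  -- The absolutely convergent sum over `k` agrees with the symmetric one defining `G₂`.
  have hsum : wzeta ω₁ ω₂ (u + ω₂) - wzeta ω₁ ω₂ u = ω₂⁻¹ * EisensteinSeries.G2 z := by
    rw [← hcol.tsum_eq, EisensteinSeries.G2, ← tsum_mul_left,
      tsum_eq_of_summable_unconditional (L := SummationFilter.symmetricIcc ℤ) hcol.summable]
  rw [hsum, ← pi_sq_div_three_mul_E2, hz]
  field_simp
end

section
/- For every u ∈ ℂ with u ∉ Γ and u + ω₁ ∉ Γ, one has ζ(u + ω₁) − ζ(u) = −2πi/ω₂ + (π²ω₁/(3ω₂²)) · E2(τ), where τ = ω₁/ω₂. In particular, the quasi-period η₁ := ζ(u + ω₁) − ζ(u) is independent of u. -/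
open Filter Topology Asymptotics SummationFilter Complex
open scoped UpperHalfPlane ArithmeticFunction.sigma

/-- The general term of the zeta series of the lattice `ℤ z + ℤ`. At `kn = 0` its value is `1 / v`,
because `1 / 0 = 0`. -/
noncomputable def zetaTerm (z v : ℂ) (kn : ℤ × ℤ) : ℂ :=
  1 / (v - (kn.1 * z + kn.2)) + 1 / (kn.1 * z + kn.2) + v / (kn.1 * z + kn.2) ^ 2

/-- The term at `γ` equals `v ^ 2 / (γ ^ 2 * (v - γ))`, hence is of order `|γ| ^ (-3)`. -/
lemma summable_zetaTerm (z : ℍ) (v : ℂ) (hv : ∀ k n : ℤ, v ≠ k * z + n) :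
    Summable (zetaTerm z v) := by
  rw [← (finTwoArrowEquiv ℤ).summable_iff]
  let l : (Fin 2 → ℤ) → ℂ := fun m ↦ m 0 * z + m 1
  have hl : (fun m ↦ (l m)⁻¹) =O[cofinite] fun m ↦ ‖m‖⁻¹ := by
    simpa [l] using EisensteinSeries.isBigO_linear_add_const_vec z 0 0
  have hl0 (m : Fin 2 → ℤ) (hm : m ≠ 0) : l m ≠ 0 := by
    intro h
    have h1 := EisensteinSeries.r_mul_max_le z hm
    have h2 : 0 < EisensteinSeries.r z * ‖m‖ :=
      mul_pos (EisensteinSeries.r_pos z) (norm_pos_iff.mpr hm)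
    have h3 : ‖(m 0 : ℂ) * z + m 1‖ = 0 := by simpa using h
    linarith
  have hne : ∀ᶠ m : Fin 2 → ℤ in cofinite, m ≠ 0 := by
    simp [eventually_cofinite]
  have hl' : (fun m : Fin 2 → ℤ ↦ ‖m‖) =O[cofinite] l := by
    have := hl.inv_rev (by
      filter_upwards [hne] with m hm h
      exact absurd h (inv_ne_zero (hl0 m hm)))
    simpa using this
  have hconst : (fun _ : Fin 2 → ℤ ↦ -v) =o[cofinite] l := by
    have : (fun _ : Fin 2 → ℤ ↦ (![1, 1] : Fin 2 → ℤ)) =o[cofinite] l :=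
      (EisensteinSeries.isLittleO_const_left_of_properSpace_of_discreteTopology _).trans_isBigO hl'
    refine IsBigO.trans_isLittleO ?_ this
    exact isBigO_const_const _ (by simp) _
  have hsub : (fun m ↦ (l m + -v)⁻¹) =O[cofinite] fun m ↦ ‖m‖⁻¹ :=
    ((isTheta_refl l cofinite).add_isLittleO hconst).inv.isBigO.trans hl
  refine EisensteinSeries.summable_of_isBigO_rpow_norm (a := 3) (by norm_num) ?_
  have key : (fun m ↦ -v ^ 2 * ((l m)⁻¹ * (l m)⁻¹ * (l m + -v)⁻¹)) =O[cofinite]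
      fun m ↦ ‖m‖⁻¹ * ‖m‖⁻¹ * ‖m‖⁻¹ := ((hl.mul hl).mul hsub).const_mul_left _
  refine key.congr' ?_ (.of_forall fun m ↦ ?_)
  · filter_upwards [hne] with m hm
    have h1 := hl0 m hm
    have h2 : v - l m ≠ 0 := sub_ne_zero.mpr (hv _ _)
    have h3 : l m + -v ≠ 0 := fun h ↦ h2 (by linear_combination -h)
    simp only [Function.comp, zetaTerm, finTwoArrowEquiv_apply]
    change _ = 1 / (v - l m) + 1 / l m + v / l m ^ 2
    field_simp
    ring
  · have : ‖m‖ ^ (3 : ℝ) = ‖m‖ ^ 3 := by exact_mod_cast Real.rpow_natCast ‖m‖ 3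
    simp only [this, ← mul_inv]
    ring

lemma summable_inv_sub_inv (a b : ℂ) (ha : a ∈ integerComplement) (hb : b ∈ integerComplement) :
    Summable fun n : ℤ ↦ 1 / (a - n) - 1 / (b - n) := by
  have h1 := (EisensteinSeries.linear_inv_isBigO_right (-1) a).mul
    (EisensteinSeries.linear_inv_isBigO_right (-1) b)
  have h2 : Summable fun n : ℤ ↦ (((-1 : ℤ) * a + n) * ((-1 : ℤ) * b + n))⁻¹ :=
    EisensteinSeries.summable_inv_of_isBigO_rpow_inv (a := 2) (by norm_num)
      (by simpa [pow_two, mul_comm] using h1)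
  refine (h2.mul_left (b - a)).congr fun n ↦ ?_
  have ha' : a - n ≠ 0 := by
    simpa [sub_eq_add_neg] using integerComplement_add_ne_zero ha (-n)
  have hb' : b - n ≠ 0 := by
    simpa [sub_eq_add_neg] using integerComplement_add_ne_zero hb (-n)
  have : ((-1 : ℤ) * a + n) * ((-1 : ℤ) * b + n) = (a - n) * (b - n) := by push_cast; ring
  rw [this]
  field_simp
  ring

lemma tsum_inv_sub_inv_eq_cot (a b : ℂ) (ha : a ∈ integerComplement)
    (hb : b ∈ integerComplement) :
    ∑' n : ℤ, (1 / (a - n) - 1 / (b - n)) =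
      Real.pi * cot (Real.pi * a) - Real.pi * cot (Real.pi * b) := by
  have hs := (summable_inv_sub_inv a b ha hb).hasSum.nat_add_neg
  rw [← hasSum_nat_add_iff' 1] at hs
  have hc := ((summable_cotTerm ha).hasSum.sub (summable_cotTerm hb).hasSum)
  rw [← cot_series_rep' ha, ← cot_series_rep' hb] at hc
  have hterm (n : ℕ) (c : ℂ) : cotTerm c n =
      1 / (c - ((n + 1 : ℕ) : ℤ)) + 1 / (c - (-((n + 1 : ℕ) : ℤ) : ℤ)) := by
    simp [cotTerm]
    ring
  simp only [hterm, add_sub_add_comm] at hc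
  have := hs.unique hc
  simp at this
  simp only [one_div]
  linear_combination this

/-- `π cot` tends to `-πi` at `+i∞`. -/
lemma tendsto_cot_up (z : ℍ) (a : ℂ) :
    Tendsto (fun N : ℕ ↦ Real.pi * cot (Real.pi * (a + N * z))) atTop (𝓝 (-(Real.pi * I))) := by
  have hq : Tendsto (fun N : ℕ ↦ exp (2 * I * (Real.pi * (a + N * z)))) atTop (𝓝 0) := by
    have h := (tendsto_pow_atTop_nhds_zero_of_norm_lt_one
      (UpperHalfPlane.norm_exp_two_pi_I_lt_one z)).const_mul (exp (2 * I * Real.pi * a))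
    rw [mul_zero] at h
    refine h.congr fun N ↦ ?_
    rw [← exp_nat_mul, ← exp_add]
    ring_nf
  simp_rw [cot_eq_exp_ratio]
  have h := ((hq.add_const 1).div ((hq.const_sub 1).const_mul I) (by simp)).const_mul
    (Real.pi : ℂ)
  simpa using h

lemma cot_neg_eq (x : ℂ) : cot (-x) = -cot x := by
  simp [cot, div_neg]

/-- `π cot` tends to `πi` at `-i∞`. -/
lemma tendsto_cot_down (z : ℍ) (a : ℂ) :
    Tendsto (fun N : ℕ ↦ Real.pi * cot (Real.pi * (a - N * z))) atTop (𝓝 (Real.pi * I)) := by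
  have h := (tendsto_cot_up z (-a)).neg
  rw [neg_neg] at h
  refine h.congr fun N ↦ ?_
  rw [show (Real.pi : ℂ) * (-a + N * z) = -(Real.pi * (a - N * z)) by ring, cot_neg_eq]
  ring

/-- The value of the conditionally convergent series `G₂(z)`, as given by its `q`-expansion,
in terms of `E2`. -/
lemma G2_value (z : ℍ) :
    2 * riemannZeta 2 - 8 * (Real.pi : ℂ) ^ 2 *
      ∑' n : ℕ+, (σ 1 n : ℂ) * exp (2 * Real.pi * I * z) ^ (n : ℕ) =
    (Real.pi : ℂ) ^ 2 / 3 * E2 z := by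
  rw [tsum_pnat_eq_tsum_succ (f := fun n : ℕ ↦ (σ 1 n : ℂ) * exp (2 * Real.pi * I * z) ^ n),
    riemannZeta_two, E2]
  simp only [ArithmeticFunction.sigma_apply, sigmaC, qexp]
  push_cast
  ring

/-- The quasi-period relation for the normalized lattice `ℤ z + ℤ`. -/
lemma tsum_zetaTerm_add_sub (z : ℍ) (v : ℂ) (hv : ∀ k n : ℤ, v ≠ k * z + n) :
    ∑' kn, zetaTerm z (v + z) kn - ∑' kn, zetaTerm z v kn =
      -(2 * Real.pi * I) + z * ((Real.pi : ℂ) ^ 2 / 3 * E2 z) := by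
  have hv' : ∀ k n : ℤ, v + z ≠ k * z + n := fun k n h ↦ hv (k - 1) n (by
    push_cast; linear_combination h)
  have hs := summable_zetaTerm z v hv
  have hs' := summable_zetaTerm z (v + z) hv'
  have hd := hs'.sub hs
  rw [← hs'.tsum_sub hs, hd.tsum_prod]
  have hmem (k : ℤ) : v + z - k * z ∈ integerComplement := by
    rintro ⟨n, hn⟩
    exact hv' k n (by linear_combination -hn)
  let f : ℤ → ℂ := fun k ↦ Real.pi * cot (Real.pi * (v + z - k * z))
  have inner (k : ℤ) : ∑' n : ℤ, (zetaTerm z (v + z) (k, n) - zetaTerm z v (k, n)) =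
      (f k - f (k + 1)) + z * EisensteinSeries.e2Summand k z := by
    have hm2 := hmem (k + 1)
    simp only [f]
    rw [← tsum_inv_sub_inv_eq_cot _ _ (hmem k) hm2, EisensteinSeries.e2Summand, ← tsum_mul_left,
      ← (summable_inv_sub_inv _ _ (hmem k) hm2).tsum_add
        ((EisensteinSeries.e2Summand_summable k z).mul_left _)]
    refine tsum_congr fun n ↦ ?_
    have e1 : v + z - (k * z + n) = v + z - k * z - n := by ring
    have e2 : v - (k * z + n) = v + z - ((k + 1 : ℤ) : ℂ) * z - n := by push_cast; ring
    simp only [zetaTerm, EisensteinSeries.eisSummand, e1, e2]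
    simp only [Matrix.cons_val_zero, Matrix.cons_val_one, zpow_neg, div_eq_mul_inv]
    norm_cast
    ring
  have hsum : HasSum (fun k : ℤ ↦ (f k - f (k + 1)) + z * EisensteinSeries.e2Summand k z)
      (∑' k : ℤ, ∑' n : ℤ, (zetaTerm z (v + z) (k, n) - zetaTerm z v (k, n))) := by
    simp_rw [← inner]
    exact hd.prod.hasSum
  -- `G₂` converges only conditionally, so both parts are summed over `-N ≤ k < N`, where the
  -- cotangent part telescopes.
  have h1 := hasSum_symmetricIco_int_iff.mp (hsum.mono_left (symmetricIco ℤ).le_atTop)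
  have h2 := hasSum_symmetricIco_int_iff.mp
    ((EisensteinSeries.hasSum_e2Summand_symmetricIco z).mul_left (z : ℂ))
  rw [G2_value] at h2
  have h3 : Tendsto (fun N : ℕ ↦ ∑ k ∈ Finset.Ico (-(N : ℤ)) N, (f k - f (k + 1))) atTop
      (𝓝 (-(Real.pi * I) - Real.pi * I)) := by
    simp_rw [Finset.sum_Ico_int_sub]
    refine ((tendsto_cot_up z (v + z)).sub (tendsto_cot_down z (v + z))).congr fun N ↦ ?_
    simp [f]
  simp_rw [Finset.sum_add_distrib] at h1
  rw [tendsto_nhds_unique h1 (h3.add h2)]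
  ring

/-- The zeta-function of `ℤ ω₁ + ℤ ω₂` in terms of that of `ℤ z + ℤ`, the polar term being absorbed
into the series. -/
lemma wzeta_eq_tsum (ω₁ ω₂ : ℂ) (hω₂ : ω₂ ≠ 0) (z : ℍ) (hz : (z : ℂ) = ω₁ / ω₂) (u : ℂ)
    (hu : ∀ k n : ℤ, u / ω₂ ≠ k * z + n) :
    wzeta ω₁ ω₂ u = (∑' kn, zetaTerm z (u / ω₂) kn) / ω₂ := by
  have h1 : ω₁ = z * ω₂ := by rw [hz]; field_simp
  have hs := summable_zetaTerm z _ hu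
  rw [hs.tsum_eq_add_tsum_ite (0, 0), wzeta, add_div, ← tsum_div_const]
  congr 1
  · simp [zetaTerm]
    field_simp
  · refine tsum_congr fun kn ↦ ?_
    split_ifs with h
    · simp
    · have e1 : (kn.1 : ℂ) * ω₁ + kn.2 * ω₂ = (kn.1 * z + kn.2) * ω₂ := by rw [h1]; ring
      have e2 : u - (kn.1 * z + kn.2) * ω₂ = (u / ω₂ - (kn.1 * z + kn.2)) * ω₂ := by field_simp
      rw [e1, e2, zetaTerm]
      simp only [div_eq_mul_inv, mul_inv, mul_pow]
      field_simp

/-- The quasi-period `η₁ = ζ(u + ω₁) - ζ(u)` equals `-2πi/ω₂ + (π²ω₁/(3ω₂²)) E₂(τ)`;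
in particular it is independent of `u`. -/
theorem quasi_period_one_formula (ω₁ ω₂ : ℂ) (hω₁ : ω₁ ≠ 0) (hω₂ : ω₂ ≠ 0)
    (hτ : 0 < (ω₁ / ω₂).im) (u : ℂ)
    (hu : u ∉ lattice ω₁ ω₂) (hu' : u + ω₁ ∉ lattice ω₁ ω₂) :
    wzeta ω₁ ω₂ (u + ω₁) - wzeta ω₁ ω₂ u
      = -(2 * Real.pi * Complex.I) / ω₂
        + (Real.pi : ℂ) ^ 2 * ω₁ / (3 * ω₂ ^ 2) * E2 (ω₁ / ω₂) := by
  let z : ℍ := ⟨ω₁ / ω₂, hτ⟩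
  have hz : (z : ℂ) = ω₁ / ω₂ := rfl
  have hv (w : ℂ) (hw : w ∉ lattice ω₁ ω₂) (k n : ℤ) : w / ω₂ ≠ k * z + n := by
    intro h
    refine hw ⟨k, n, ?_⟩
    rw [hz] at h
    field_simp at h
    linear_combination h
  have hadd : (u + ω₁) / ω₂ = u / ω₂ + z := by rw [hz]; ring
  rw [wzeta_eq_tsum ω₁ ω₂ hω₂ z hz _ (hv _ hu'), wzeta_eq_tsum ω₁ ω₂ hω₂ z hz _ (hv _ hu),
    ← sub_div, hadd, tsum_zetaTerm_add_sub z _ (hv _ hu), hz]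
  field_simp
end

section
/- For all integers a, b, c, d with ad − bc = 1 and all τ ∈ ℍ, one has E2((aτ + b)/(cτ + d)) = (cτ + d)² E2(τ) − (6i/π) · c · (cτ + d). -/
open UpperHalfPlane in
lemma E2_eq_eisensteinSeries_E2 (z : ℍ) : E2 (z : ℂ) = EisensteinSeries.E2 z := by
  rw [EisensteinSeries.E2_eq_tsum_cexp,
    tsum_pnat_eq_tsum_succ (f := fun n : ℕ ↦
      (ArithmeticFunction.sigma 1 n : ℂ) * Complex.exp (2 * Real.pi * Complex.I * z) ^ n), E2]
  simp [sigmaC, qexp, ArithmeticFunction.sigma_apply]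

/-- The quasi-modular transformation behavior of `E₂` under the modular group. -/
theorem E2_modular_transformation (a b c d : ℤ) (h : a * d - b * c = 1)
    (τ : ℂ) (hτ : 0 < τ.im) :
    E2 (((a : ℂ) * τ + b) / ((c : ℂ) * τ + d))
      = ((c : ℂ) * τ + d) ^ 2 * E2 τ
        - 6 * Complex.I / Real.pi * c * ((c : ℂ) * τ + d) := by
  let γ : Matrix.SpecialLinearGroup (Fin 2) ℤ :=
    ⟨!![a, b; c, d], by rw [Matrix.det_fin_two_of]; exact h⟩
  let z : UpperHalfPlane := ⟨τ, hτ⟩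
  have hden : UpperHalfPlane.denom γ z = (c : ℂ) * τ + d := by
    rw [ModularGroup.denom_apply]
    simp [γ, z]
  have hne : (c : ℂ) * τ + d ≠ 0 := hden ▸ UpperHalfPlane.denom_ne_zero γ z
  have hact : ((γ • z : UpperHalfPlane) : ℂ) = ((a : ℂ) * τ + b) / ((c : ℂ) * τ + d) := by
    rw [UpperHalfPlane.specialLinearGroup_apply]
    simp [γ, z]
  have key := congrFun (EisensteinSeries.E2_slash_action γ) z
  rw [ModularForm.SL_slash_apply, hden] at key
  simp only [Pi.sub_apply, Pi.smul_apply, EisensteinSeries.D2, hden, riemannZeta_two,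
    smul_eq_mul, ← E2_eq_eisensteinSeries_E2, hact] at key
  have hc : γ 1 0 = c := rfl
  have hz : (z : ℂ) = τ := rfl
  have hpi : (Real.pi : ℂ) ≠ 0 := by exact_mod_cast Real.pi_ne_zero
  rw [hc, hz, zpow_neg, zpow_ofNat] at key
  rw [← div_eq_mul_inv, div_eq_iff (pow_ne_zero 2 hne)] at key
  rw [key]
  field_simp
end

section
/- Ramanujan identity for E2: for all τ ∈ ℍ, (1/(2πi)) · E2'(τ) = (E2(τ)² − E4(τ))/12, where E2' denotes the complex derivative of E2. -/
open Filter Topology UpperHalfPlane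
open scoped MatrixGroups ModularForm Manifold Real ArithmeticFunction.sigma

/-- The constant term of a convergent `q`-expansion is its limit at `i∞`: dividing the remaining
terms by `q` leaves another convergent `q`-expansion, hence a bounded function, and `q → 0`. -/
lemma tendsto_atImInfty_of_hasSum {f : ℍ → ℂ} {c : ℕ → ℂ}
    (hf : ∀ τ : ℍ, HasSum (fun m ↦ c m • Function.Periodic.qParam 1 τ ^ m) (f τ)) :
    Tendsto f atImInfty (𝓝 (c 0)) := by
  have hq : ∀ τ : ℍ, Function.Periodic.qParam 1 (τ : ℂ) ≠ 0 := fun τ ↦ Complex.exp_ne_zero _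
  have hg : IsBoundedAtImInfty
      fun τ : ℍ ↦ (f τ - c 0) / Function.Periodic.qParam 1 (τ : ℂ) := by
    refine isBoundedAtImInfty_of_hasSum_qExpansion (c := fun m ↦ c (m + 1)) one_pos fun τ ↦ ?_
    convert! ((hasSum_nat_add_iff' 1).mpr (hf τ)).div_const (Function.Periodic.qParam 1 (τ : ℂ))
      using 1
    · funext m
      have := hq τ
      simp only [smul_eq_mul, pow_succ]
      field_simp
    · simp
  have h0 : Tendsto (fun τ : ℍ ↦ Function.Periodic.qParam 1 (τ : ℂ) *
      ((f τ - c 0) / Function.Periodic.qParam 1 (τ : ℂ))) atImInfty (𝓝 0) :=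
    (qParam_tendsto_atImInfty one_pos).zero_mul_isBoundedUnder_le
      (Asymptotics.isBigO_one_iff ℝ |>.mp hg)
  have h1 := h0.add_const (c 0)
  rw [zero_add] at h1
  refine h1.congr fun τ ↦ ?_
  rw [mul_div_cancel₀ _ (hq τ), sub_add_cancel]

lemma tendsto_E2_atImInfty : Tendsto EisensteinSeries.E2 atImInfty (𝓝 1) := by
  simpa only [if_true] using! tendsto_atImInfty_of_hasSum (fun τ ↦ by
    simpa only [Function.Periodic.qParam, Complex.ofReal_one, div_one]
      using EisensteinSeries.hasSum_qExpansion_E2 (z := τ))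

lemma tendsto_E₄_atImInfty : Tendsto ModularForm.E₄ atImInfty (𝓝 1) := by
  rw [← EisensteinSeries.E_qExpansion_coeff_zero (by norm_num : 3 ≤ 4) ⟨2, rfl⟩]
  exact tendsto_atImInfty_of_hasSum fun τ ↦
    ModularForm.hasSum_qExpansion ModularForm.E₄ one_pos one_mem_strictPeriods_SL τ

/-- A holomorphic function bounded at `i∞` has derivative tending to `0` there, by Cauchy's
estimate on a disc around `z` whose radius grows like `Im z`. -/
lemma tendsto_normalizedDeriv_atImInfty {f : ℍ → ℂ} (hf : MDiff f)
    (hb : IsBoundedAtImInfty f) :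
    Tendsto (Derivative.normalizedDerivOfComplex f) atImInfty (𝓝 0) := by
  obtain ⟨M, A, hMA⟩ := isBoundedAtImInfty_iff.mp hb
  rw [UpperHalfPlane.mdifferentiable_iff] at hf
  set B : ℝ := max A 1 with hB
  have hB1 : 1 ≤ B := le_max_right _ _
  have key : ∀ z : ℍ, B < z.im → ‖deriv (f ∘ ofComplex) z‖ ≤ M / (z.im - B) := by
    intro z hz
    have him : ∀ w ∈ Metric.closedBall (z : ℂ) (z.im - B), B ≤ w.im := by
      intro w hw
      have h1 := (Complex.abs_im_le_norm (w - z)).trans (by simpa [dist_eq_norm] using hw)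
      have h2 := (abs_le.mp h1).1
      simp at h2
      linarith
    refine Complex.norm_deriv_le_of_forall_mem_sphere_norm_le (by linarith) ?_ fun w hw ↦ ?_
    · refine (hf.mono fun w hw ↦ ?_).diffContOnCl_ball subset_rfl
      exact lt_of_lt_of_le (by linarith) (him w hw)
    · have hw' := him w (Metric.sphere_subset_closedBall hw)
      have hpos : 0 < w.im := by linarith
      rw [Function.comp_apply, ofComplex_apply_of_im_pos hpos]
      exact hMA _ ((le_max_left _ _).trans hw')
  have hlim : Tendsto (fun z : ℍ ↦ M / (z.im - B)) atImInfty (𝓝 0) :=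
    tendsto_const_nhds.div_atTop (tendsto_atTop_add_const_right _ _ tendsto_comap)
  have hd : Tendsto (fun z : ℍ ↦ deriv (f ∘ ofComplex) z) atImInfty (𝓝 0) := by
    refine squeeze_zero_norm' ?_ hlim
    have : ∀ᶠ z : ℍ in atImInfty, B < z.im := tendsto_comap.eventually (eventually_gt_atTop B)
    filter_upwards [this] with z hz using key z hz
  simpa only [mul_zero] using! hd.const_mul (2 * π * Complex.I)⁻¹

/-- `D E₂ - E₂² / 12` is invariant in weight `4`. The anomaly of `E₂` is a multiple of
`c / (c z + d)`, and its contributions to `D E₂` and to `E₂² / 12` cancel. -/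
lemma serreDerivative_E2_slash (γ : SL(2, ℤ)) :
    Derivative.serreDerivative 1 EisensteinSeries.E2 ∣[(4 : ℤ)] γ =
      Derivative.serreDerivative 1 EisensteinSeries.E2 := by
  ext z
  have hden := denom_ne_zero (γ : GL (Fin 2) ℝ) z
  have hpi : (π : ℂ) ≠ 0 := by exact_mod_cast Real.pi_ne_zero
  have hE2 (w : ℍ) : (EisensteinSeries.E2 ∣[(2 : ℤ)] γ) w = EisensteinSeries.E2 w -
      6 * Complex.I / π * (γ 1 0 * (denom γ w) ^ (-1 : ℤ)) := by
    rw [EisensteinSeries.E2_slash_action]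
    simp [EisensteinSeries.D2, riemannZeta_two]
    field_simp
  have hD := congrFun (Derivative.normalizedDerivOfComplex_SL_slash (k := 2)
    E2_mdifferentiable (γ := γ)) z
  have hD' : Derivative.normalizedDerivOfComplex (EisensteinSeries.E2 ∣[(2 : ℤ)] γ) z =
      Derivative.normalizedDerivOfComplex EisensteinSeries.E2 z +
        3 / π ^ 2 * (γ 1 0 / denom γ z) ^ 2 := by
    have hdE := (UpperHalfPlane.mdifferentiableAt_iff.mp (E2_mdifferentiable z)).hasDerivAt
    have hdd := (hasDerivAt_denom_zpow (γ : GL (Fin 2) ℝ) (-1) z).const_mul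
      (6 * Complex.I / π * (γ 1 0 : ℂ))
    have heq : ((EisensteinSeries.E2 ∣[(2 : ℤ)] γ) ∘ ofComplex) =ᶠ[𝓝 (z : ℂ)]
        fun w ↦ (EisensteinSeries.E2 ∘ ofComplex) w -
          6 * Complex.I / π * (γ 1 0 : ℂ) * (denom γ w) ^ (-1 : ℤ) := by
      filter_upwards [isOpen_upperHalfPlaneSet.mem_nhds z.im_pos] with w hw
      simp only [Function.comp_apply, hE2, ofComplex_apply_of_im_pos hw]
      ring
    rw [Derivative.normalizedDerivOfComplex, Derivative.normalizedDerivOfComplex,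
      ((hdE.sub hdd).congr_of_eventuallyEq heq).deriv]
    rw [show (-1 - 1 : ℤ) = -2 by norm_num, zpow_neg]
    simp
    field_simp
    ring_nf
    rw [Complex.I_sq]
    ring
  have hslash : (Derivative.serreDerivative 1 EisensteinSeries.E2 ∣[(4 : ℤ)] γ) z =
      (Derivative.normalizedDerivOfComplex EisensteinSeries.E2 ∣[(4 : ℤ)] γ) z -
        12⁻¹ * ((EisensteinSeries.E2 ∣[(2 : ℤ)] γ) z) ^ 2 := by
    simp only [ModularForm.SL_slash_apply, Derivative.serreDerivative_apply]
    rw [show (-4 : ℤ) = -2 + -2 by norm_num, zpow_add₀ hden]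
    ring
  rw [hD'] at hD
  simp only [Pi.sub_apply, hE2] at hD
  replace hD := (eq_sub_iff_add_eq.mp hD).symm
  change (Derivative.normalizedDerivOfComplex EisensteinSeries.E2 ∣[(4 : ℤ)] γ) z = _ at hD
  rw [hslash, hE2, Derivative.serreDerivative_apply, hD]
  simp only [zpow_neg, zpow_one, Int.cast_ofNat]
  field_simp
  ring_nf
  simp only [Complex.I_sq, Complex.I_pow_three]
  ring

lemma tendsto_serreDerivative_E2 :
    Tendsto (Derivative.serreDerivative 1 EisensteinSeries.E2) atImInfty (𝓝 (-1 / 12)) := by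
  have hD := tendsto_normalizedDeriv_atImInfty E2_mdifferentiable
    EisensteinSeries.isBoundedAtImInfty_E2
  have h := hD.sub ((tendsto_E2_atImInfty.const_mul (1 * 12⁻¹)).mul tendsto_E2_atImInfty)
  convert! h using 2
  norm_num

/-- `D E₂ - E₂² / 12` as a modular form of weight `4` and level one. -/
noncomputable def serreE2Form : ModularForm 𝒮ℒ 4 where
  toFun := Derivative.serreDerivative 1 EisensteinSeries.E2
  slash_action_eq' := fun _ ⟨γ, hγ⟩ ↦ hγ ▸ serreDerivative_E2_slash γ
  holo' := Derivative.serreDerivative_mdifferentiable 1 E2_mdifferentiable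
  bdd_at_cusps' {c} hc := by
    rw [Subgroup.IsArithmetic.isCusp_iff_isCusp_SL2Z] at hc
    rw [OnePoint.isBoundedAt_iff_forall_SL2Z hc]
    intro γ _
    rw [serreDerivative_E2_slash γ]
    exact tendsto_serreDerivative_E2.isBigO_one ℝ

lemma serreDerivative_E2_eq (z : ℍ) :
    Derivative.serreDerivative 1 EisensteinSeries.E2 z = -1 / 12 * ModularForm.E₄ z := by
  obtain ⟨c, hc⟩ : ∃ c : ℂ, c • ModularForm.E₄ = serreE2Form :=
    (finrank_eq_one_iff_of_nonzero' ModularForm.E₄ (EisensteinSeries.E_ne_zero _ ⟨2, rfl⟩)).mp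
      (Module.rank_eq_one_iff_finrank_eq_one.mp ModularForm.levelOne_weight_four_rank_one) _
  have hc' (w : ℍ) : Derivative.serreDerivative 1 EisensteinSeries.E2 w =
      c * ModularForm.E₄ w :=
    (DFunLike.congr_fun hc w).symm
  have hlim : Tendsto (Derivative.serreDerivative 1 EisensteinSeries.E2) atImInfty (𝓝 c) := by
    rw [funext hc']
    simpa using tendsto_E₄_atImInfty.const_mul c
  rw [hc', tendsto_nhds_unique hlim tendsto_serreDerivative_E2]

lemma sigmaC_eq (k n : ℕ) : sigmaC k n = (σ k n : ℂ) := by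
  simp [sigmaC, ArithmeticFunction.sigma_apply]

lemma E2_eq (z : ℍ) : E2 z = EisensteinSeries.E2 z := by
  rw [EisensteinSeries.E2_eq_tsum_cexp, tsum_pnat_eq_tsum_succ
    (f := fun n ↦ (σ 1 n : ℂ) * Complex.exp (2 * π * Complex.I * z) ^ n)]
  simp only [E2, sigmaC_eq, qexp]

lemma E4_eq (z : ℍ) : E4 z = ModularForm.E₄ z := by
  have h := EisensteinSeries.q_expansion_bernoulli (by norm_num : 3 ≤ 4) ⟨2, rfl⟩ z
  simp only [zpow_natCast] at h
  rw [h, tsum_pnat_eq_tsum_succ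
    (f := fun n ↦ (σ (4 - 1) n : ℂ) * Complex.exp (2 * π * Complex.I * z) ^ n)]
  simp only [E4, sigmaC_eq, qexp]
  norm_num [show bernoulli 4 = -1 / 30 by decide +kernel]

/-- Ramanujan's identity `(1/(2πi)) E₂' = (E₂² - E₄)/12`. -/
theorem ramanujan_E2 (τ : ℂ) (hτ : 0 < τ.im) :
    HasDerivAt E2 (2 * Real.pi * Complex.I * ((E2 τ ^ 2 - E4 τ) / 12)) τ := by
  lift τ to ℍ using hτ
  have heq : E2 =ᶠ[𝓝 (τ : ℂ)] EisensteinSeries.E2 ∘ ofComplex := by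
    filter_upwards [isOpen_upperHalfPlaneSet.mem_nhds τ.im_pos] with w hw
    rw [Function.comp_apply, ofComplex_apply_of_im_pos hw, ← E2_eq]
  have hd := (UpperHalfPlane.mdifferentiableAt_iff.mp (E2_mdifferentiable τ)).hasDerivAt
  refine (hd.congr_of_eventuallyEq heq).congr_deriv ?_
  have h := serreDerivative_E2_eq τ
  rw [Derivative.serreDerivative_apply, Derivative.normalizedDerivOfComplex, sub_eq_iff_eq_add,
    inv_mul_eq_iff_eq_mul₀ Complex.two_pi_I_ne_zero] at h
  rw [h, E2_eq, E4_eq]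
  ring
end
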